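/- arXiv:2403.02842 — 2 statements merged into one kernel-verified Lean document; each statement's English description precedes it below -/
import Mathlib

section
/- Let p = p(n) ∈ [0,1] satisfy 3 log n/(4n) ≤ p(n) for all sufficiently large n and p(n) → 0 as n → ∞. Then asymptotically almost surely G ~ G(n,p) satisfies all of the following: (a) for each pair of distinct vertices u, v of G, there are fewer than np/2400 paths of length 2 joining u and v; (b) every vertex of G has degree at most 4np; (c) every set A of ⌈n/3⌉ vertices of G induces at least n²p/25 edges. -/
open Filter

/-- The outneighbourhood `N1(v)` of `v` in the digraph with arc relation `D`. -/
def outNbr {V : Type*} (D : V → V → Prop) (v : V) : Set V := {w | w ≠ v ∧ D v w}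

/-- The inneighbourhood `N⁻(v)` of `v`. -/
def inNbr {V : Type*} (D : V → V → Prop) (v : V) : Set V := {w | w ≠ v ∧ D w v}

/-- The second outneighbourhood `N2(v)` of `v`. -/
def outNbr2 {V : Type*} (D : V → V → Prop) (v : V) : Set V :=
  {w | w ∉ insert v (outNbr D v) ∧ ∃ u ∈ outNbr D v, D u w}

/-- `v` is a Seymour vertex: `|N2(v)| ≥ |N1(v)|`. -/
def SeymourVertex {V : Type*} (D : V → V → Prop) (v : V) : Prop :=
  (outNbr D v).ncard ≤ (outNbr2 D v).ncard

/-- `v` is a Sullivan vertex: `|N2(v)| ≥ |N⁻(v)|`. -/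
def SullivanVertex {V : Type*} (D : V → V → Prop) (v : V) : Prop :=
  (inNbr D v).ncard ≤ (outNbr2 D v).ncard

/-- An oriented graph: an asymmetric (hence irreflexive and loopless) arc relation. -/
def OrientedGraph {V : Type*} (D : V → V → Prop) : Prop := ∀ u v, D u v → ¬ D v u

/-- `D` is an orientation of the simple graph `G`. -/
def Orients {V : Type*} (D : V → V → Prop) (G : SimpleGraph V) : Prop :=
  OrientedGraph D ∧ ∀ u v, G.Adj u v ↔ (D u v ∨ D v u)

/-- Strong connectivity of a digraph: every vertex reaches every other by a directed path. -/
def StrongConn {V : Type*} (D : V → V → Prop) : Prop := ∀ u v, Relation.ReflTransGen D u v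

/-- The number of edges of `G` with one endpoint in `A` and the other in `B`
(counted via ordered pairs; equals `e(A,B)` for disjoint `A`, `B`). -/
noncomputable def eBtw {V : Type*} (G : SimpleGraph V) (A B : Set V) : ℕ :=
  {p : V × V | p.1 ∈ A ∧ p.2 ∈ B ∧ G.Adj p.1 p.2}.ncard

/-- The number of edges of `G` with both endpoints in `A`. -/
noncomputable def eIn {V : Type*} (G : SimpleGraph V) (A : Set V) : ℕ :=
  {e | e ∈ G.edgeSet ∧ ∀ v ∈ e, v ∈ A}.ncard

open scoped Classical in
/-- The probability that the binomial random graph `G(n,p)` satisfies the property `P`. -/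
noncomputable def gnpProb (n : ℕ) (p : ℝ) (P : SimpleGraph (Fin n) → Prop) : ℝ :=
  ∑ G : SimpleGraph (Fin n),
    if P G then p ^ G.edgeSet.ncard * (1 - p) ^ (n.choose 2 - G.edgeSet.ncard) else 0

open scoped Classical in
noncomputable def wt (n : ℕ) (p : ℝ) (G : SimpleGraph (Fin n)) : ℝ :=
  p ^ G.edgeSet.ncard * (1 - p) ^ (n.choose 2 - G.edgeSet.ncard)

open scoped Classical in
noncomputable def E0 (n : ℕ) : Finset (Sym2 (Fin n)) := (⊤ : SimpleGraph (Fin n)).edgeFinset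

lemma card_E0 (n : ℕ) : (E0 n).card = n.choose 2 := by
  classical
  have := SimpleGraph.card_edgeFinset_top_eq_card_choose_two (V := Fin n)
  rw [Fintype.card_fin] at this
  rw [← this, E0]

lemma mem_E0 {n : ℕ} (e : Sym2 (Fin n)) : e ∈ E0 n ↔ ¬ e.IsDiag := by
  classical
  simp [E0]

open scoped Classical in
lemma key (n : ℕ) (p : ℝ) (a b : Sym2 (Fin n) → ℝ) :
    ∑ G : SimpleGraph (Fin n), wt n p G * ∏ e ∈ E0 n, (if e ∈ G.edgeSet then a e else b e)
      = ∏ e ∈ E0 n, (p * a e + (1 - p) * b e) := by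
  rw [Finset.prod_add]
  refine Finset.sum_bij' (fun G _ => G.edgeFinset)
    (fun S _ => SimpleGraph.fromEdgeSet (S : Set (Sym2 (Fin n)))) ?_ ?_ ?_ ?_ ?_
  · intro G _
    rw [Finset.mem_powerset]
    intro e he
    rw [mem_E0]
    exact G.not_isDiag_of_mem_edgeFinset he
  · intros; simp
  · intro G _; simp
  · intro S hS
    rw [Finset.mem_powerset] at hS
    ext e
    simp only [SimpleGraph.mem_edgeFinset, SimpleGraph.edgeSet_fromEdgeSet, Set.mem_sdiff,
      Finset.mem_coe]
    constructor
    · exact fun h => h.1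
    · exact fun h => ⟨h, (mem_E0 e).1 (hS h)⟩
  · intro G _
    have hsub : G.edgeFinset ⊆ E0 n := by
      intro e he
      rw [mem_E0]
      exact G.not_isDiag_of_mem_edgeFinset he
    have hnc : G.edgeSet.ncard = G.edgeFinset.card := by
      rw [← SimpleGraph.coe_edgeFinset, Set.ncard_coe_finset]
    rw [Finset.prod_mul_distrib, Finset.prod_mul_distrib, Finset.prod_const, Finset.prod_const,
      Finset.card_sdiff_of_subset hsub, card_E0, wt, hnc, ← Finset.prod_sdiff hsub]
    have h1 : ∏ e ∈ E0 n \ G.edgeFinset, (if e ∈ G.edgeSet then a e else b e)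
        = ∏ e ∈ E0 n \ G.edgeFinset, b e := by
      refine Finset.prod_congr rfl fun e he => ?_
      rw [if_neg]
      simpa using (Finset.mem_sdiff.1 he).2
    have h2 : ∏ e ∈ G.edgeFinset, (if e ∈ G.edgeSet then a e else b e)
        = ∏ e ∈ G.edgeFinset, a e := by
      refine Finset.prod_congr rfl fun e he => ?_
      rw [if_pos]
      simpa using he
    rw [h1, h2]
    ring

lemma wt_nonneg {n : ℕ} {p : ℝ} (hp : p ∈ Set.Icc (0 : ℝ) 1) (G) : 0 ≤ wt n p G :=
  mul_nonneg (pow_nonneg hp.1 _) (pow_nonneg (by linarith [hp.2]) _)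

lemma sum_wt (n : ℕ) (p : ℝ) : ∑ G, wt n p G = 1 := by
  have := key n p (fun _ => 1) (fun _ => 1)
  simpa using this

open scoped Classical in
lemma ex_pow (n : ℕ) (p s : ℝ) (T : Finset (Sym2 (Fin n))) (hT : T ⊆ E0 n) :
    ∑ G : SimpleGraph (Fin n), wt n p G * s ^ (T.filter (· ∈ G.edgeSet)).card
      = (p * s + (1 - p)) ^ T.card := by
  have := key n p (fun e => if e ∈ T then s else 1) (fun _ => 1)
  convert this using 1
  · refine Finset.sum_congr rfl fun G _ => ?_
    congr 1
    rw [← Finset.prod_const, Finset.prod_filter, ← Finset.prod_sdiff hT]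
    rw [Finset.prod_eq_one (s := E0 n \ T), one_mul]
    · refine Finset.prod_congr rfl fun e he => ?_
      simp [he]
    · intro e he
      simp [(Finset.mem_sdiff.1 he).2]
  · rw [← Finset.prod_const, ← Finset.prod_sdiff hT]
    rw [Finset.prod_eq_one (s := E0 n \ T), one_mul]
    · refine Finset.prod_congr rfl fun e he => ?_
      simp [he]
    · intro e he
      simp [(Finset.mem_sdiff.1 he).2]

open scoped Classical in
lemma ex_sub (n : ℕ) (p : ℝ) (T : Finset (Sym2 (Fin n))) (hT : T ⊆ E0 n) :
    ∑ G : SimpleGraph (Fin n), wt n p G * (if ∀ e ∈ T, e ∈ G.edgeSet then 1 else 0)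
      = p ^ T.card := by
  have := key n p (fun e => 1) (fun e => if e ∈ T then 0 else 1)
  convert this using 1
  · refine Finset.sum_congr rfl fun G _ => ?_
    congr 1
    split_ifs with h
    · symm
      apply Finset.prod_eq_one
      intro e he
      split_ifs with h1 h2 <;> simp_all
    · push Not at h
      obtain ⟨e, he, h2⟩ := h
      symm
      apply Finset.prod_eq_zero (hT he)
      simp [he, h2]
  · rw [← Finset.prod_const, ← Finset.prod_sdiff hT]
    rw [Finset.prod_eq_one (s := E0 n \ T), one_mul]
    · refine Finset.prod_congr rfl fun e he => ?_
      simp [he]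
    · intro e he
      simp [(Finset.mem_sdiff.1 he).2]

lemma prob_ge {n : ℕ} {p : ℝ} (hp : p ∈ Set.Icc (0 : ℝ) 1) (P : SimpleGraph (Fin n) → Prop)
    (f : SimpleGraph (Fin n) → ℝ) (hf : ∀ G, 0 ≤ f G) (h : ∀ G, ¬ P G → 1 ≤ f G) :
    1 - ∑ G, wt n p G * f G ≤ gnpProb n p P := by
  classical
  rw [← sum_wt n p, ← Finset.sum_sub_distrib, gnpProb]
  refine Finset.sum_le_sum fun G _ => ?_
  have := wt_nonneg hp G
  split_ifs with hP
  · change _ ≤ wt n p G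
    nlinarith [mul_nonneg this (hf G)]
  · nlinarith [mul_le_mul_of_nonneg_left (h G hP) this]

lemma prob_le {n : ℕ} {p : ℝ} (hp : p ∈ Set.Icc (0 : ℝ) 1) (P : SimpleGraph (Fin n) → Prop) :
    gnpProb n p P ≤ 1 := by
  classical
  rw [← sum_wt n p, gnpProb]
  refine Finset.sum_le_sum fun G _ => ?_
  have := wt_nonneg hp G
  split_ifs with hP
  · exact le_rfl
  · exact this

-- degrees
lemma ex_deg {n : ℕ} {p : ℝ} (hp : p ∈ Set.Icc (0 : ℝ) 1) (v : Fin n) :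
    ∑ G : SimpleGraph (Fin n), wt n p G * (2 : ℝ) ^ (G.neighborSet v).ncard
      ≤ Real.exp (n * p) := by
  classical
  have hT : (⊤ : SimpleGraph (Fin n)).incidenceFinset v ⊆ E0 n := by
    intro e he
    rw [mem_E0]
    simp at he
    have := he.1
    simpa using this
  have := ex_pow n p 2 _ hT
  have h2 : ∀ G : SimpleGraph (Fin n), (G.neighborSet v).ncard =
      (((⊤ : SimpleGraph (Fin n)).incidenceFinset v).filter (· ∈ G.edgeSet)).card := by
    intro G
    rw [Set.ncard_eq_toFinset_card', ← SimpleGraph.neighborFinset,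
      SimpleGraph.card_neighborFinset_eq_degree, ← SimpleGraph.card_incidenceFinset_eq_degree]
    congr 1
    ext e
    simp only [SimpleGraph.mem_incidenceFinset, Finset.mem_filter, SimpleGraph.incidenceSet,
      Set.mem_sep_iff]
    constructor
    · rintro ⟨h1, h2⟩
      exact ⟨⟨by simpa using G.not_isDiag_of_mem_edgeSet h1, h2⟩, h1⟩
    · tauto
  simp_rw [h2, this]
  rw [SimpleGraph.card_incidenceFinset_eq_degree, SimpleGraph.complete_graph_degree,
    Fintype.card_fin]
  have h3 : p * 2 + (1 - p) ≤ Real.exp p := by linarith [Real.add_one_le_exp p]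
  calc (p * 2 + (1 - p)) ^ (n-1) ≤ (p * 2 + (1 - p)) ^ n :=
        pow_le_pow_right₀ (by linarith [hp.1]) (by omega)
    _ ≤ (Real.exp p) ^ n := pow_le_pow_left₀ (by linarith [hp.1]) h3 _
    _ = _ := by rw [← Real.exp_nat_mul]

lemma ex_ein {n : ℕ} {p : ℝ} (hp : p ∈ Set.Icc (0 : ℝ) 1) (A : Finset (Fin n)) :
    ∑ G : SimpleGraph (Fin n), wt n p G * (3 / 4 : ℝ) ^ (eIn G (A : Set (Fin n)))
      ≤ Real.exp (-(p / 4) * (A.card.choose 2 : ℕ)) := by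
  classical
  set T := A.offDiag.image (fun x => s(x.1, x.2)) with hTdef
  have hmem : ∀ e, e ∈ T ↔ (¬ e.IsDiag ∧ ∀ v ∈ e, v ∈ A) := by
    intro e
    induction e using Sym2.ind with
    | _ x y =>
      simp only [hTdef, Finset.mem_image, Finset.mem_offDiag, Prod.exists, Sym2.mem_iff,
        Sym2.mk_isDiag_iff]
      constructor
      · rintro ⟨a, b, ⟨h1, h2, h3⟩, h4⟩
        rw [Sym2.eq_iff] at h4
        rcases h4 with ⟨rfl, rfl⟩ | ⟨rfl, rfl⟩ <;> grind
      · rintro ⟨h1, h2⟩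
        exact ⟨x, y, ⟨h2 x (by simp), h2 y (by simp), h1⟩, rfl⟩
  have hT : T ⊆ E0 n := by
    intro e he
    rw [mem_E0]
    exact ((hmem e).1 he).1
  have hc : T.card = A.card.choose 2 := by
    rw [hTdef]; exact Sym2.card_image_offDiag A
  have := ex_pow n p (3/4) _ hT
  have h2 : ∀ G : SimpleGraph (Fin n), eIn G (A : Set (Fin n)) =
      (T.filter (· ∈ G.edgeSet)).card := by
    intro G
    rw [eIn, ← Set.ncard_coe_finset]
    congr 1
    ext e
    simp only [Set.mem_setOf_eq, Finset.coe_filter, hmem, Finset.mem_coe]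
    constructor
    · rintro ⟨h1, h2⟩
      exact ⟨⟨G.not_isDiag_of_mem_edgeSet h1, h2⟩, h1⟩
    · tauto
  simp_rw [h2, this]
  rw [hc]
  have h3 : p * (3/4) + (1 - p) ≤ Real.exp (-(p/4)) := by linarith [Real.add_one_le_exp (-(p/4))]
  calc (p * (3/4) + (1 - p)) ^ _ ≤ (Real.exp (-(p/4))) ^ (A.card.choose 2) :=
        pow_le_pow_left₀ (by linarith [hp.1, hp.2]) h3 _
    _ = _ := by rw [← Real.exp_nat_mul]; ring_nf

lemma ex_codeg {n : ℕ} {p : ℝ} (hp : p ∈ Set.Icc (0 : ℝ) 1) (hp0 : 0 < p) (u v : Fin n)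
    (huv : u ≠ v) :
    ∑ G : SimpleGraph (Fin n), wt n p G *
      (1 / p : ℝ) ^ ({w | w ≠ u ∧ w ≠ v ∧ G.Adj u w ∧ G.Adj w v} : Set (Fin n)).ncard
      ≤ Real.exp (n * p) := by
  classical
  set s := 1 / p with hs
  have hs1 : 1 ≤ s := by rw [hs, le_div_iff₀ hp0]; linarith [hp.2]
  set V : Finset (Fin n) := Finset.univ.filter (fun w => w ≠ u ∧ w ≠ v) with hV
  set F : Finset (Fin n) → Finset (Sym2 (Fin n)) := fun W =>
    W.image (fun w => s(u, w)) ∪ W.image (fun w => s(w, v)) with hF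
  have hexp : ∀ G : SimpleGraph (Fin n),
      s ^ ({w | w ≠ u ∧ w ≠ v ∧ G.Adj u w ∧ G.Adj w v} : Set (Fin n)).ncard
      = ∑ W ∈ V.powerset, (s - 1) ^ W.card * (if ∀ e ∈ F W, e ∈ G.edgeSet then 1 else 0) := by
    intro G
    have e1 : s ^ ({w | w ≠ u ∧ w ≠ v ∧ G.Adj u w ∧ G.Adj w v} : Set (Fin n)).ncard
      = ∏ w ∈ V, ((s - 1) * (if G.Adj u w ∧ G.Adj w v then 1 else 0) + 1) := by
      have : ({w | w ≠ u ∧ w ≠ v ∧ G.Adj u w ∧ G.Adj w v} : Set (Fin n))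
         = ((V.filter (fun w => G.Adj u w ∧ G.Adj w v) : Finset (Fin n)) : Set (Fin n)) := by
        ext w; simp [hV, and_assoc]
      rw [this, Set.ncard_coe_finset, ← Finset.prod_const, Finset.prod_filter]
      refine Finset.prod_congr rfl fun w _ => ?_
      split_ifs <;> ring
    rw [e1, Finset.prod_add]
    refine Finset.sum_congr rfl fun W hW => ?_
    rw [Finset.prod_const_one, mul_one, Finset.prod_mul_distrib, Finset.prod_const]
    congr 1
    rw [Finset.prod_ite_zero, Finset.prod_const_one]
    congr 1
    simp only [hF, Finset.mem_union, Finset.mem_image, eq_iff_iff]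
    constructor
    · rintro h e (⟨w, hw, rfl⟩ | ⟨w, hw, rfl⟩)
      · exact (h w hw).1
      · exact (h w hw).2
    · intro h w hw
      exact ⟨h _ (Or.inl ⟨w, hw, rfl⟩), h _ (Or.inr ⟨w, hw, rfl⟩)⟩
  simp_rw [hexp, Finset.mul_sum]
  rw [Finset.sum_comm]
  have h1 : ∀ W ∈ V.powerset, ∑ G : SimpleGraph (Fin n), wt n p G *
      ((s - 1) ^ W.card * (if ∀ e ∈ F W, e ∈ G.edgeSet then 1 else 0))
      = ((s - 1) * p ^ 2) ^ W.card * 1 ^ (V.card - W.card) := by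
    intro W hW
    rw [Finset.mem_powerset] at hW
    have hWu : ∀ w ∈ W, w ≠ u ∧ w ≠ v := fun w hw => by
      have := hW hw
      simpa [hV] using this
    have hFE : F W ⊆ E0 n := by
      intro e he
      rw [mem_E0]
      simp only [hF, Finset.mem_union, Finset.mem_image] at he
      rcases he with ⟨w, hw, rfl⟩ | ⟨w, hw, rfl⟩
      · simpa using (hWu w hw).1.symm
      · simpa using (hWu w hw).2
    have hcard : (F W).card = 2 * W.card := by
      rw [hF]
      simp only
      rw [Finset.card_union_of_disjoint, Finset.card_image_of_injective,
        Finset.card_image_of_injective, two_mul]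
      · intro a b hab; simp only [Sym2.eq_iff] at hab; grind
      · intro a b hab; simp only [Sym2.eq_iff] at hab; grind
      · rw [Finset.disjoint_left]
        intro e h1 h2
        simp only [Finset.mem_image] at h1 h2
        obtain ⟨a, ha, rfl⟩ := h1
        obtain ⟨b, hb, hab⟩ := h2
        rw [Sym2.eq_iff] at hab
        have := hWu a ha
        have := hWu b hb
        grind
    have := ex_sub n p (F W) hFE
    rw [hcard] at this
    rw [mul_pow, ← pow_mul, ← this, Finset.mul_sum, Finset.sum_mul]
    refine Finset.sum_congr rfl fun G _ => ?_
    simp only [one_pow]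
    ring
  rw [Finset.sum_congr rfl h1, Finset.sum_pow_mul_eq_add_pow]
  have h4 : (s - 1) * p ^ 2 + 1 ≤ Real.exp p := by
    have : s * p = 1 := by rw [hs]; field_simp
    have : (s - 1) * p ^ 2 = p - p ^ 2 := by linear_combination p * this
    nlinarith [Real.add_one_le_exp p]
  have h5 : 1 ≤ (s - 1) * p ^ 2 + 1 := by
    have := mul_nonneg (sub_nonneg.2 hs1) (sq_nonneg p)
    linarith
  have h6 : V.card ≤ n := by simpa using Finset.card_le_univ V
  calc ((s - 1) * p ^ 2 + 1) ^ V.card ≤ ((s - 1) * p ^ 2 + 1) ^ n := pow_le_pow_right₀ h5 h6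
    _ ≤ (Real.exp p) ^ n := pow_le_pow_left₀ (by linarith) h4 _
    _ = _ := by rw [← Real.exp_nat_mul]


lemma mk1 {s x : ℝ} (hs : 1 ≤ s) {k : ℕ} (h : x ≤ k) : 1 ≤ s ^ k * s ^ (-x) := by
  rw [← Real.rpow_natCast, ← Real.rpow_add (by linarith)]
  exact Real.one_le_rpow hs (by linarith)

lemma mk2 {x : ℝ} {k : ℕ} (h : (k : ℝ) ≤ x) : 1 ≤ (3 / 4 : ℝ) ^ k * (3 / 4 : ℝ) ^ (-x) := by
  rw [← Real.rpow_natCast, ← Real.rpow_add (by norm_num)]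
  exact Real.one_le_rpow_of_pos_of_le_one_of_nonpos (by norm_num) (by norm_num) (by linarith)

open scoped Classical in
lemma main_bound {n : ℕ} (hn : 3 ≤ n) {p : ℝ} (hp : p ∈ Set.Icc (0 : ℝ) 1) (hp0 : 0 < p) :
    1 - ((n : ℝ) ^ 2 * (Real.exp (n * p) * (1 / p) ^ (-(n * p / 2400)))
        + n * (Real.exp (n * p) * (2 : ℝ) ^ (-(4 * n * p)))
        + 2 ^ n * (Real.exp (-(p / 4) * (n ^ 2 / 18 - n / 6))
            * (3 / 4 : ℝ) ^ (-((n : ℝ) ^ 2 * p / 25)))) ≤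
    gnpProb n p (fun G =>
      (∀ u v : Fin n, u ≠ v →
        (({w | w ≠ u ∧ w ≠ v ∧ G.Adj u w ∧ G.Adj w v}).ncard : ℝ) < n * p / 2400) ∧
      (∀ v, ((G.neighborSet v).ncard : ℝ) ≤ 4 * n * p) ∧
      (∀ A : Set (Fin n), A.ncard = ⌈(n : ℝ) / 3⌉₊ →
        (n : ℝ)^2 * p / 25 ≤ (eIn G A : ℝ))) := by
  have hs1 : 1 ≤ 1 / p := by rw [le_div_iff₀ hp0]; linarith [hp.2]
  set c1 : ℝ := (1 / p) ^ (-(n * p / 2400)) with hc1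
  set c2 : ℝ := (2 : ℝ) ^ (-(4 * n * p)) with hc2
  set c3 : ℝ := (3 / 4 : ℝ) ^ (-((n : ℝ) ^ 2 * p / 25)) with hc3
  have c1p : 0 ≤ c1 := Real.rpow_nonneg (by linarith) _
  have c2p : 0 ≤ c2 := Real.rpow_nonneg (by norm_num) _
  have c3p : 0 ≤ c3 := Real.rpow_nonneg (by norm_num) _
  let f1 : SimpleGraph (Fin n) → Fin n → Fin n → ℝ := fun G u v =>
    if u ≠ v then (1 / p : ℝ) ^ ({w | w ≠ u ∧ w ≠ v ∧ G.Adj u w ∧ G.Adj w v} : Set (Fin n)).ncard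
      * c1 else 0
  let f2 : SimpleGraph (Fin n) → Fin n → ℝ := fun G v =>
    (2 : ℝ) ^ (G.neighborSet v).ncard * c2
  let f3 : SimpleGraph (Fin n) → Finset (Fin n) → ℝ := fun G A =>
    if A.card = ⌈(n : ℝ) / 3⌉₊ then (3 / 4 : ℝ) ^ (eIn G (A : Set (Fin n))) * c3 else 0
  have f1p : ∀ G u v, 0 ≤ f1 G u v := by
    intro G u v
    simp only [f1]
    split_ifs
    · exact mul_nonneg (pow_nonneg (by linarith) _) c1p
    · exact le_rfl
  have f2p : ∀ G v, 0 ≤ f2 G v := fun G v => mul_nonneg (pow_nonneg (by norm_num) _) c2p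
  have f3p : ∀ G A, 0 ≤ f3 G A := by
    intro G A
    simp only [f3]
    split_ifs
    · exact mul_nonneg (pow_nonneg (by norm_num) _) c3p
    · exact le_rfl
  have F1p : ∀ G, 0 ≤ ∑ u, ∑ v, f1 G u v := fun G =>
    Finset.sum_nonneg fun u _ => Finset.sum_nonneg fun v _ => f1p G u v
  have F2p : ∀ G, 0 ≤ ∑ v, f2 G v := fun G => Finset.sum_nonneg fun v _ => f2p G v
  have F3p : ∀ G, 0 ≤ ∑ A, f3 G A := fun G => Finset.sum_nonneg fun v _ => f3p G v
  refine le_trans ?_ (prob_ge hp _ (fun G => ∑ u, ∑ v, f1 G u v + ∑ v, f2 G v + ∑ A, f3 G A)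
    (fun G => by have := F1p G; have := F2p G; have := F3p G; positivity) ?_)
  · apply sub_le_sub_left
    have e : ∀ G, wt n p G * (∑ u, ∑ v, f1 G u v + ∑ v, f2 G v + ∑ A, f3 G A)
      = (∑ u, ∑ v, wt n p G * f1 G u v) + (∑ v, wt n p G * f2 G v) + ∑ A, wt n p G * f3 G A := by
      intro G
      simp only [mul_add, Finset.mul_sum]
    rw [Finset.sum_congr rfl fun G _ => e G, Finset.sum_add_distrib, Finset.sum_add_distrib]
    refine add_le_add (add_le_add ?_ ?_) ?_
    · rw [Finset.sum_comm]
      have : ∀ u v, ∑ G, wt n p G * f1 G u v ≤ Real.exp (n * p) * c1 := by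
        intro u v
        by_cases huv : u = v
        · simp only [f1, huv]
          simp
          positivity
        · simp only [f1, ne_eq, huv, not_false_eq_true, if_true]
          simp_rw [← mul_assoc]
          rw [← Finset.sum_mul]
          exact mul_le_mul_of_nonneg_right (ex_codeg hp hp0 u v huv) c1p
      calc _ ≤ ∑ u : Fin n, ∑ v : Fin n, Real.exp (n * p) * c1 := by
            refine Finset.sum_le_sum fun u _ => ?_
            rw [Finset.sum_comm]
            exact Finset.sum_le_sum fun v _ => this u v
        _ = _ := by simp; ring
    · rw [Finset.sum_comm]
      have : ∀ v, ∑ G, wt n p G * f2 G v ≤ Real.exp (n * p) * c2 := by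
        intro v
        simp only [f2]
        simp_rw [← mul_assoc]
        rw [← Finset.sum_mul]
        exact mul_le_mul_of_nonneg_right (ex_deg hp v) c2p
      calc _ ≤ ∑ v : Fin n, Real.exp (n * p) * c2 := Finset.sum_le_sum fun v _ => this v
        _ = _ := by simp
    · rw [Finset.sum_comm]
      have : ∀ A, ∑ G, wt n p G * f3 G A ≤ Real.exp (-(p / 4) * (n ^ 2 / 18 - n / 6)) * c3 := by
        intro A
        by_cases hA : A.card = ⌈(n : ℝ) / 3⌉₊
        · simp only [f3, hA, if_true]
          simp_rw [← mul_assoc]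
          rw [← Finset.sum_mul]
          refine mul_le_mul_of_nonneg_right ((ex_ein hp A).trans ?_) c3p
          rw [Real.exp_le_exp]
          have h1 : (n : ℝ) / 3 ≤ A.card := by rw [hA]; exact Nat.le_ceil _
          have h2 : (n : ℝ) ^ 2 / 18 - n / 6 ≤ (A.card.choose 2 : ℕ) := by
            rw [Nat.cast_choose_two]
            have : (3 : ℝ) ≤ n := by exact_mod_cast hn
            nlinarith
          nlinarith
        · simp only [f3, hA, if_false]
          simp
          positivity
      calc _ ≤ ∑ A : Finset (Fin n), Real.exp (-(p / 4) * (n ^ 2 / 18 - n / 6)) * c3 :=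
            Finset.sum_le_sum fun A _ => this A
        _ = _ := by simp
  · intro G hG
    by_contra hlt
    push Not at hlt
    apply hG
    refine ⟨?_, ?_, ?_⟩
    · intro u v huv
      by_contra hc
      push Not at hc
      have h1 := mk1 hs1 hc
      have h2 : f1 G u v ≤ ∑ u, ∑ v, f1 G u v :=
        (Finset.single_le_sum (fun v _ => f1p G u v) (Finset.mem_univ v)).trans
          (Finset.single_le_sum (f := fun u => ∑ v, f1 G u v)
            (fun u _ => Finset.sum_nonneg fun v _ => f1p G u v) (Finset.mem_univ u))
      have h3 : 1 ≤ f1 G u v := by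
        simp only [f1, ne_eq, huv, not_false_eq_true, if_true]
        exact h1
      linarith [F2p G, F3p G]
    · intro v
      by_contra hc
      push Not at hc
      have h1 : 1 ≤ f2 G v := mk1 (by norm_num) hc.le
      have h2 : f2 G v ≤ ∑ v, f2 G v :=
        (Finset.single_le_sum (fun v _ => f2p G v) (Finset.mem_univ v))
      linarith [F1p G, F3p G]
    · intro A hA
      by_contra hc
      push Not at hc
      have h0 : ((A.toFinset : Finset (Fin n)) : Set (Fin n)) = A := by simp
      have h1 : 1 ≤ f3 G A.toFinset := by
        rw [Set.ncard_eq_toFinset_card'] at hA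
        simp only [f3, hA, if_true]
        rw [h0]
        exact mk2 hc.le
      have h2 : f3 G A.toFinset ≤ ∑ A, f3 G A :=
        (Finset.single_le_sum (fun v _ => f3p G v) (Finset.mem_univ _))
      linarith [F1p G, F2p G]

lemma num1 {n p : ℝ} (hn : 1 ≤ n) (hp0 : 0 < p) (hl : 3 * Real.log n / (4 * n) ≤ p)
    (hp : p ≤ Real.exp (-12000)) :
    n ^ 2 * (Real.exp (n * p) * (1 / p) ^ (-(n * p / 2400))) ≤ Real.exp (-Real.log n) := by
  have hn0 : 0 < n := by linarith
  rw [div_le_iff₀ (by linarith)] at hl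
  have hlp : Real.log p ≤ -12000 := by
    have := Real.log_le_log hp0 hp
    rwa [Real.log_exp] at this
  rw [Real.rpow_def_of_pos (by positivity), ← Real.exp_add, one_div, Real.log_inv]
  have : n ^ 2 = Real.exp (2 * Real.log n) := by
    rw [two_mul, Real.exp_add, Real.exp_log hn0]; ring
  rw [this, ← Real.exp_add, Real.exp_le_exp]
  have hnp : 0 < n * p := by positivity
  nlinarith

lemma num2 {n p : ℝ} (hn : 1 ≤ n) (hl : 3 * Real.log n / (4 * n) ≤ p) :
    n * (Real.exp (n * p) * (2 : ℝ) ^ (-(4 * n * p))) ≤ Real.exp (-(1/4) * Real.log n) := by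
  have hn0 : 0 < n := by linarith
  rw [div_le_iff₀ (by linarith)] at hl
  have hlog := Real.log_nonneg hn
  rw [Real.rpow_def_of_pos (by positivity), ← Real.exp_add]
  nth_rw 1 [← Real.exp_log hn0]
  rw [← Real.exp_add, Real.exp_le_exp]
  have hnp : 0 ≤ n * p := by linarith
  nlinarith [Real.log_two_gt_d9]

lemma num3 {n : ℕ} {p : ℝ} (hn : 1000 ≤ n) (hl : 3 * Real.log n / (4 * n) ≤ p)
    (hL : 10000 ≤ Real.log n) :
    2 ^ n * (Real.exp (-(p / 4) * (n ^ 2 / 18 - n / 6))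
            * (3 / 4 : ℝ) ^ (-((n : ℝ) ^ 2 * p / 25))) ≤ Real.exp (-Real.log n) := by
  have hn1 : (1000 : ℝ) ≤ n := by exact_mod_cast hn
  rw [div_le_iff₀ (by linarith)] at hl
  rw [Real.rpow_def_of_pos (by positivity), ← Real.exp_add]
  have h2 : (2 : ℝ) ^ n ≤ Real.exp n := by
    have : (2 : ℝ) ≤ Real.exp 1 := by linarith [Real.add_one_le_exp (1 : ℝ)]
    calc (2 : ℝ) ^ n ≤ (Real.exp 1) ^ n := pow_le_pow_left₀ (by norm_num) this _
      _ = _ := by rw [← Real.exp_nat_mul, mul_one]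
  refine (mul_le_mul_of_nonneg_right h2 (Real.exp_nonneg _)).trans ?_
  rw [← Real.exp_add, Real.exp_le_exp]
  have h3 : -Real.log (3 / 4) ≤ 1 / 3 := by
    rw [← Real.log_inv]
    have := Real.log_le_sub_one_of_pos (x := (3 / 4 : ℝ)⁻¹) (by norm_num)
    norm_num at this ⊢
    linarith
  have h4 : Real.log n ≤ n := by
    have := Real.log_le_sub_one_of_pos (x := (n : ℝ)) (by linarith)
    linarith
  have hnp : 7500 ≤ n * p := by linarith
  have h5 : (n : ℝ) ^ 2 * p / 25 * (-Real.log (3 / 4)) ≤ (n : ℝ) ^ 2 * p / 25 * (1 / 3) :=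
    mul_le_mul_of_nonneg_left h3 (by nlinarith)
  have h6 : 7500 * (n : ℝ) ≤ n * p * n := by nlinarith
  nlinarith

/-- if `p = p(n) ∈ [0,1]` satisfies `3 log n/(4n) ≤ p(n)` for large `n`
and `p(n) → 0`, then a.a.s. `G(n,p)` satisfies: (a) any two distinct vertices are joined
by fewer than `np/2400` paths of length 2; (b) all degrees are at most `4np`;
(c) every set of `⌈n/3⌉` vertices induces at least `n²p/25` edges. -/
theorem stmt_15 (p : ℕ → ℝ) (hp : ∀ n, p n ∈ Set.Icc (0 : ℝ) 1)
    (hlb : ∀ᶠ n : ℕ in atTop, 3 * Real.log n / (4 * n) ≤ p n)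
    (h0 : Tendsto p atTop (nhds 0)) :
    Tendsto (fun n => gnpProb n (p n) (fun G =>
      (∀ u v : Fin n, u ≠ v →
        (({w | w ≠ u ∧ w ≠ v ∧ G.Adj u w ∧ G.Adj w v}).ncard : ℝ) < n * p n / 2400) ∧
      (∀ v, ((G.neighborSet v).ncard : ℝ) ≤ 4 * n * p n) ∧
      (∀ A : Set (Fin n), A.ncard = ⌈(n : ℝ) / 3⌉₊ →
        (n : ℝ)^2 * p n / 25 ≤ (eIn G A : ℝ))))
      atTop (nhds 1) := by
  have hnat : Tendsto (fun n : ℕ => Real.log (n : ℝ)) atTop atTop :=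
    Real.tendsto_log_atTop.comp tendsto_natCast_atTop_atTop
  have hlim : Tendsto (fun n : ℕ => 1 - (Real.exp (-Real.log (n : ℝ))
      + Real.exp (-(1/4) * Real.log (n : ℝ)) + Real.exp (-Real.log (n : ℝ)))) atTop (nhds 1) := by
    have h1 : Tendsto (fun n : ℕ => Real.exp (-Real.log (n : ℝ))) atTop (nhds 0) :=
      Real.tendsto_exp_atBot.comp (tendsto_neg_atTop_atBot.comp hnat)
    have h2 : Tendsto (fun n : ℕ => Real.exp (-(1/4) * Real.log (n : ℝ))) atTop (nhds 0) :=
      Real.tendsto_exp_atBot.comp (hnat.const_mul_atTop_of_neg (by norm_num))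
    have := ((h1.add h2).add h1).const_sub 1
    simpa using this
  refine tendsto_of_tendsto_of_tendsto_of_le_of_le' hlim tendsto_const_nhds ?_
    (Eventually.of_forall fun n => prob_le (hp n) _)
  filter_upwards [hlb, hnat.eventually_ge_atTop 10000, eventually_ge_atTop 1000,
    h0.eventually_le_const (Real.exp_pos (-12000))] with n hl hL hn hps
  have hn1 : (1000 : ℝ) ≤ n := by exact_mod_cast hn
  have hp0 : 0 < p n := lt_of_lt_of_le (by positivity) hl
  refine le_trans ?_ (main_bound (by omega) (hp n) hp0)
  have a1 := num1 (by linarith) hp0 hl hps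
  have a2 := num2 (by linarith) hl
  have a3 := num3 hn hl hL
  linarith
end

section
/- Let p = p(n) ∈ [0,1] satisfy p(n)·(log n)^{1/3} → ∞ and limsup_{n→∞} p(n) < 1/2, let ε > 0 be such that p(n) ≤ 1/2 − ε for all sufficiently large n, and set δ := ε/5. Then there exists a constant C = C(ε) > 0 such that asymptotically almost surely G ~ G(n,p) satisfies all of the following: (a) every vertex v of G has degree d(v) with (1−δ)np ≤ d(v) ≤ (1+δ)np; (b) for every vertex set A with |A| ≥ δn, (1−δ)·C(|A|,2)·p ≤ e(A) ≤ (1+δ)·C(|A|,2)·p; (c) for every pair of disjoint vertex sets A, B with |A| ≥ C log n and |B| ≥ np², (1−δ)|A||B|p ≤ e(A,B) ≤ (1+δ)|A||B|p; (d) for every pair of disjoint vertex sets A, B with |A|, |B| ≥ n^{3/4}, (1−δ)|A||B|p ≤ e(A,B) ≤ (1+δ)|A||B|p. -/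
open Filter

open scoped Classical in
noncomputable def wtG (n : ℕ) (p : ℝ) (G : SimpleGraph (Fin n)) : ℝ :=
  p ^ G.edgeSet.ncard * (1 - p) ^ (n.choose 2 - G.edgeSet.ncard)

open scoped Classical in
lemma gnpProb_eq (n : ℕ) (p : ℝ) (P : SimpleGraph (Fin n) → Prop) :
    gnpProb n p P = ∑ G : SimpleGraph (Fin n), if P G then wtG n p G else 0 := rfl

open scoped Classical in
lemma sum_wtG (n : ℕ) (p : ℝ) (f : Sym2 (Fin n) → ℝ) :
    ∑ G : SimpleGraph (Fin n), wtG n p G * ∏ e ∈ G.edgeFinset, f e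
      = ∏ e ∈ (⊤ : SimpleGraph (Fin n)).edgeFinset, (p * f e + (1 - p)) := by
  rw [Finset.prod_add]
  refine Finset.sum_bij (fun G _ => G.edgeFinset) ?_ ?_ ?_ ?_
  · intro G _
    rw [Finset.mem_powerset]
    exact SimpleGraph.edgeFinset_mono le_top
  · intro G _ H _ h
    exact SimpleGraph.edgeFinset_inj.1 h
  · intro T hT
    rw [Finset.mem_powerset] at hT
    obtain ⟨H, hH⟩ : ∃ H : SimpleGraph (Fin n), H = SimpleGraph.fromEdgeSet
      (T : Set (Sym2 (Fin n))) := ⟨_, rfl⟩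
    refine ⟨H, Finset.mem_univ _, ?_⟩
    ext e
    rw [SimpleGraph.mem_edgeFinset, hH, SimpleGraph.edgeSet_fromEdgeSet]
    constructor
    · rintro ⟨h, _⟩
      exact_mod_cast h
    · intro h
      refine ⟨by exact_mod_cast h, ?_⟩
      have := hT h
      rw [SimpleGraph.mem_edgeFinset] at this
      exact SimpleGraph.not_isDiag_of_mem_edgeSet _ this
  · intro G _
    have hc : G.edgeSet.ncard = G.edgeFinset.card := by
      rw [← SimpleGraph.coe_edgeFinset, Set.ncard_coe_finset]
    have hU : (⊤ : SimpleGraph (Fin n)).edgeFinset.card = n.choose 2 := by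
      rw [SimpleGraph.card_edgeFinset_top_eq_card_choose_two, Fintype.card_fin]
    have hsub : G.edgeFinset ⊆ (⊤ : SimpleGraph (Fin n)).edgeFinset :=
      SimpleGraph.edgeFinset_mono le_top
    rw [Finset.prod_mul_distrib, Finset.prod_const, Finset.prod_const,
      Finset.card_sdiff_of_subset hsub, hU, wtG, hc]
    ring

lemma wtG_nonneg (n : ℕ) (p : ℝ) (h0 : 0 ≤ p) (h1 : p ≤ 1) (G : SimpleGraph (Fin n)) :
    0 ≤ wtG n p G := by
  unfold wtG
  have : 0 ≤ 1 - p := by linarith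
  positivity

open scoped Classical in
lemma sum_wtG_one (n : ℕ) (p : ℝ) : ∑ G : SimpleGraph (Fin n), wtG n p G = 1 := by
  have := sum_wtG n p (fun _ => 1)
  simpa using this

lemma gnpProb_compl (n : ℕ) (p : ℝ) (P : SimpleGraph (Fin n) → Prop) :
    gnpProb n p P = 1 - gnpProb n p (fun G => ¬ P G) := by
  classical
  rw [gnpProb_eq, gnpProb_eq, ← sum_wtG_one n p, ← Finset.sum_sub_distrib]
  refine Finset.sum_congr rfl fun G _ => ?_
  by_cases h : P G <;> simp [h]

lemma gnpProb_nonneg (n : ℕ) (p : ℝ) (h0 : 0 ≤ p) (h1 : p ≤ 1)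
    (P : SimpleGraph (Fin n) → Prop) : 0 ≤ gnpProb n p P := by
  rw [gnpProb_eq]
  refine Finset.sum_nonneg fun G _ => ?_
  split_ifs
  · exact wtG_nonneg n p h0 h1 G
  · exact le_rfl

lemma gnpProb_mono (n : ℕ) (p : ℝ) (h0 : 0 ≤ p) (h1 : p ≤ 1)
    (P Q : SimpleGraph (Fin n) → Prop) (h : ∀ G, P G → Q G) :
    gnpProb n p P ≤ gnpProb n p Q := by
  rw [gnpProb_eq, gnpProb_eq]
  refine Finset.sum_le_sum fun G _ => ?_
  have := wtG_nonneg n p h0 h1 G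
  by_cases hP : P G
  · simp [hP, h G hP]
  · simp only [hP, if_false]
    split_ifs <;> linarith

lemma gnpProb_or (n : ℕ) (p : ℝ) (h0 : 0 ≤ p) (h1 : p ≤ 1)
    (P Q : SimpleGraph (Fin n) → Prop) :
    gnpProb n p (fun G => P G ∨ Q G) ≤ gnpProb n p P + gnpProb n p Q := by
  rw [gnpProb_eq, gnpProb_eq, gnpProb_eq, ← Finset.sum_add_distrib]
  refine Finset.sum_le_sum fun G _ => ?_
  have := wtG_nonneg n p h0 h1 G
  by_cases hP : P G <;> by_cases hQ : Q G <;> simp [hP, hQ, this]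

lemma gnpProb_exists (n : ℕ) (p : ℝ) (h0 : 0 ≤ p) (h1 : p ≤ 1) {ι : Type*} [Fintype ι]
    (P : ι → SimpleGraph (Fin n) → Prop) :
    gnpProb n p (fun G => ∃ i, P i G) ≤ ∑ i, gnpProb n p (P i) := by
  classical
  simp only [gnpProb_eq]
  rw [Finset.sum_comm]
  refine Finset.sum_le_sum fun G _ => ?_
  have hw := wtG_nonneg n p h0 h1 G
  have hn : ∀ i ∈ (Finset.univ : Finset ι), 0 ≤ (if P i G then wtG n p G else 0) := by
    intro i _
    split_ifs <;> linarith
  split_ifs with h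
  · obtain ⟨i, hi⟩ := h
    have := Finset.single_le_sum hn (Finset.mem_univ i)
    simpa [hi] using this
  · exact Finset.sum_nonneg hn

/-- number of edges of G in S -/
noncomputable def cntS {n : ℕ} (S : Finset (Sym2 (Fin n))) (G : SimpleGraph (Fin n)) : ℕ :=
  {e | e ∈ G.edgeSet ∧ e ∈ S}.ncard

open scoped Classical in
lemma mgf (n : ℕ) (p : ℝ) (S : Finset (Sym2 (Fin n))) (hS : ∀ e ∈ S, ¬ e.IsDiag) (l : ℝ) :
    ∑ G : SimpleGraph (Fin n), wtG n p G * Real.exp (l * cntS S G)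
      = (p * Real.exp l + (1 - p)) ^ S.card := by
  have h := sum_wtG n p (fun e => if e ∈ S then Real.exp l else 1)
  have hsub : (⊤ : SimpleGraph (Fin n)).edgeFinset.filter (· ∈ S) = S := by
    ext e
    simp only [Finset.mem_filter, SimpleGraph.mem_edgeFinset, SimpleGraph.edgeSet_top]
    constructor
    · exact fun h => h.2
    · exact fun h => ⟨hS e h, h⟩
  have hR : ∏ e ∈ (⊤ : SimpleGraph (Fin n)).edgeFinset,
      (p * (if e ∈ S then Real.exp l else 1) + (1 - p))
      = (p * Real.exp l + (1 - p)) ^ S.card := by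
    rw [← Finset.prod_const, ← hsub, Finset.prod_filter, hsub]
    refine Finset.prod_congr rfl fun e _ => ?_
    split_ifs <;> ring
  rw [← hR, ← h]
  refine Finset.sum_congr rfl fun G _ => ?_
  congr 1
  rw [← Finset.prod_filter, Finset.prod_const, ← Real.exp_nat_mul, mul_comm]
  congr 3
  rw [cntS, ← Set.ncard_coe_finset]
  congr 1
  ext e
  simp

lemma chern_aux (n : ℕ) (p : ℝ) (h0 : 0 ≤ p) (h1 : p ≤ 1) (S : Finset (Sym2 (Fin n)))
    (hS : ∀ e ∈ S, ¬ e.IsDiag) (l t : ℝ) (hl : |l| ≤ 1) :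
    gnpProb n p (fun G => t ≤ l * cntS S G) ≤ Real.exp (p * S.card * (l + l ^ 2) - t) := by
  classical
  have hE := mgf n p S hS l
  have hb : (p * Real.exp l + (1 - p)) ^ S.card ≤ Real.exp (p * S.card * (l + l ^ 2)) := by
    have e1 : Real.exp l ≤ 1 + l + l ^ 2 := by
      have := (abs_le.1 (Real.abs_exp_sub_one_sub_id_le hl)).2
      linarith
    have e2 : p * Real.exp l + (1 - p) ≤ Real.exp (p * (l + l ^ 2)) := by
      have := Real.add_one_le_exp (p * (l + l ^ 2))
      nlinarith
    have e3 : 0 ≤ p * Real.exp l + (1 - p) := by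
      have := mul_nonneg h0 (Real.exp_pos l).le
      linarith
    calc _ ≤ (Real.exp (p * (l + l ^ 2))) ^ S.card := pow_le_pow_left₀ e3 e2 _
      _ = _ := by rw [← Real.exp_nat_mul]; ring_nf
  rw [sub_eq_add_neg, Real.exp_add]
  refine le_trans ?_ (mul_le_mul_of_nonneg_right hb (Real.exp_pos (-t)).le)
  rw [← hE, Finset.sum_mul, gnpProb_eq]
  refine Finset.sum_le_sum fun G _ => ?_
  have hw := wtG_nonneg n p h0 h1 G
  rw [mul_assoc, ← Real.exp_add]
  split_ifs with h
  · have : 1 ≤ Real.exp (l * cntS S G + -t) := Real.one_le_exp (by linarith)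
    nlinarith
  · positivity

def goodS {n : ℕ} (p d : ℝ) (S : Finset (Sym2 (Fin n))) (G : SimpleGraph (Fin n)) : Prop :=
  (1 - d) * S.card * p ≤ cntS S G ∧ (cntS S G : ℝ) ≤ (1 + d) * S.card * p

lemma chern (n : ℕ) (p d : ℝ) (h0 : 0 ≤ p) (h1 : p ≤ 1) (S : Finset (Sym2 (Fin n)))
    (hS : ∀ e ∈ S, ¬ e.IsDiag) (hd : 0 < d) (hd1 : d ≤ 1) :
    gnpProb n p (fun G => ¬ goodS p d S G) ≤ 2 * Real.exp (- (d ^ 2 / 4 * (p * S.card))) := by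
  have a1 := chern_aux n p h0 h1 S hS (d / 2) (d / 2 * ((1 + d) * S.card * p))
    (by rw [abs_le]; constructor <;> linarith)
  have a2 := chern_aux n p h0 h1 S hS (-(d / 2)) (-(d / 2) * ((1 - d) * S.card * p))
    (by rw [abs_le]; constructor <;> linarith)
  have b := gnpProb_or n p h0 h1 (fun G => d / 2 * ((1 + d) * S.card * p) ≤ d / 2 * cntS S G)
    (fun G => -(d / 2) * ((1 - d) * S.card * p) ≤ -(d / 2) * cntS S G)
  have c := gnpProb_mono n p h0 h1 (fun G => ¬ goodS p d S G)
    (fun G => d / 2 * ((1 + d) * S.card * p) ≤ d / 2 * cntS S G ∨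
      -(d / 2) * ((1 - d) * S.card * p) ≤ -(d / 2) * cntS S G) (by
      intro G hG
      unfold goodS at hG
      rw [not_and_or, not_le, not_le] at hG
      rcases hG with h | h
      · right; nlinarith
      · left; nlinarith)
  have e1 : p * S.card * (d / 2 + (d / 2) ^ 2) - d / 2 * ((1 + d) * S.card * p)
    = - (d ^ 2 / 4 * (p * S.card)) := by ring
  have e2 : p * S.card * (-(d / 2) + (-(d / 2)) ^ 2) - -(d / 2) * ((1 - d) * S.card * p)
    = - (d ^ 2 / 4 * (p * S.card)) := by ring
  rw [e1] at a1
  rw [e2] at a2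
  linarith

lemma chern_union (n : ℕ) (p d : ℝ) (h0 : 0 ≤ p) (h1 : p ≤ 1) {ι : Type*} [Fintype ι]
    (S : ι → Finset (Sym2 (Fin n))) (hS : ∀ i, ∀ e ∈ S i, ¬ e.IsDiag) (hd : 0 < d) (hd1 : d ≤ 1)
    (M N : ℝ) (hM : ∀ i, M ≤ p * (S i).card) (hN : (Fintype.card ι : ℝ) ≤ N) :
    gnpProb n p (fun G => ∃ i, ¬ goodS p d (S i) G) ≤ N * (2 * Real.exp (- (d ^ 2 / 4 * M))) := by
  refine (gnpProb_exists n p h0 h1 _).trans ?_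
  have : ∀ i ∈ (Finset.univ : Finset ι), gnpProb n p (fun G => ¬ goodS p d (S i) G)
      ≤ 2 * Real.exp (- (d ^ 2 / 4 * M)) := by
    intro i _
    refine (chern n p d h0 h1 (S i) (hS i) hd hd1).trans ?_
    have := hM i
    gcongr
  refine (Finset.sum_le_card_nsmul _ _ _ this).trans ?_
  rw [nsmul_eq_mul, Finset.card_univ]
  gcongr

open scoped Classical in
/-- pairs within A -/
noncomputable def inS {n : ℕ} (A : Set (Fin n)) : Finset (Sym2 (Fin n)) :=
  A.toFinset.offDiag.image Sym2.mk.uncurry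

open scoped Classical in
noncomputable def cutS {n : ℕ} (A B : Set (Fin n)) : Finset (Sym2 (Fin n)) :=
  (A.toFinset ×ˢ B.toFinset).image (fun x => s(x.1, x.2))

lemma cut_inj {n : ℕ} {A B : Set (Fin n)} (h : Disjoint A B) :
    Set.InjOn (fun x : Fin n × Fin n => s(x.1, x.2)) {x | x.1 ∈ A ∧ x.2 ∈ B} := by
  rintro ⟨a, b⟩ ⟨ha, hb⟩ ⟨c, d⟩ ⟨hc, hd⟩ he
  rw [Set.disjoint_left] at h
  simp only [Sym2.eq_iff] at he
  rcases he with ⟨rfl, rfl⟩ | ⟨rfl, rfl⟩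
  · rfl
  · exact absurd hd (h ha)

lemma cut_card {n : ℕ} {A B : Set (Fin n)} (h : Disjoint A B) :
    (cutS A B).card = A.ncard * B.ncard := by
  classical
  rw [cutS, Finset.card_image_of_injOn, Finset.card_product, Set.ncard_eq_toFinset_card',
    Set.ncard_eq_toFinset_card']
  refine (cut_inj h).mono ?_
  intro x
  simp

lemma cut_diag {n : ℕ} {A B : Set (Fin n)} (h : Disjoint A B) :
    ∀ e ∈ cutS A B, ¬ e.IsDiag := by
  classical
  intro e he
  simp only [cutS, Finset.mem_image, Finset.mem_product, Set.mem_toFinset] at he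
  obtain ⟨⟨a, b⟩, ⟨ha, hb⟩, rfl⟩ := he
  rw [Sym2.mk_isDiag_iff]
  intro hab
  have hab' : a = b := hab
  rw [← hab'] at hb
  exact (Set.disjoint_left.1 h) ha hb

lemma cut_cnt {n : ℕ} {A B : Set (Fin n)} (h : Disjoint A B) (G : SimpleGraph (Fin n)) :
    cntS (cutS A B) G = eBtw G A B := by
  classical
  rw [cntS, eBtw, ← Set.InjOn.ncard_image (f := fun x : Fin n × Fin n => s(x.1, x.2))]
  · congr 1
    ext e
    simp only [cutS, Finset.mem_image, Finset.mem_product, Set.mem_toFinset, Set.mem_ofPred_eq,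
      Set.mem_image]
    constructor
    · rintro ⟨h1, x, ⟨ha, hb⟩, rfl⟩
      exact ⟨x, ⟨ha, hb, h1⟩, rfl⟩
    · rintro ⟨x, ⟨ha, hb, h1⟩, rfl⟩
      exact ⟨h1, x, ⟨ha, hb⟩, rfl⟩
  · refine (cut_inj h).mono ?_
    rintro x ⟨ha, hb, _⟩
    exact ⟨ha, hb⟩

lemma inS_diag {n : ℕ} {A : Set (Fin n)} : ∀ e ∈ inS A, ¬ e.IsDiag := by
  classical
  intro e he
  simp only [inS, Finset.mem_image, Finset.mem_offDiag, Set.mem_toFinset] at he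
  obtain ⟨⟨a, b⟩, ⟨ha, hb, hab⟩, rfl⟩ := he
  exact hab

lemma inS_card {n : ℕ} (A : Set (Fin n)) : (inS A).card = A.ncard.choose 2 := by
  classical
  rw [inS, Set.ncard_eq_toFinset_card']
  exact Sym2.card_image_offDiag _

lemma inS_cnt {n : ℕ} (A : Set (Fin n)) (G : SimpleGraph (Fin n)) :
    cntS (inS A) G = eIn G A := by
  classical
  rw [cntS, eIn]
  congr 1
  ext e
  simp only [inS, Finset.mem_image, Finset.mem_offDiag, Set.mem_toFinset, Set.mem_ofPred_eq]
  refine and_congr_right fun he => ?_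
  induction e with
  | _ a b =>
    constructor
    · rintro ⟨⟨x, y⟩, ⟨hx, hy, _⟩, h⟩ v hv
      rw [← h] at hv
      rcases Sym2.mem_iff.1 hv with rfl | rfl <;> assumption
    · intro h
      exact ⟨(a, b), ⟨h a (Sym2.mem_mk_left _ _), h b (Sym2.mem_mk_right _ _),
        G.ne_of_adj he⟩, rfl⟩

lemma deg_eq {n : ℕ} (G : SimpleGraph (Fin n)) (v : Fin n) :
    (G.neighborSet v).ncard = eBtw G {v} {v}ᶜ := by
  rw [eBtw, ← Set.ncard_image_of_injective _ (Prod.mk_right_injective v)]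
  congr 1
  ext ⟨a, b⟩
  simp only [Set.mem_image, SimpleGraph.mem_neighborSet, Prod.mk.injEq, Set.mem_ofPred_eq,
    Set.mem_singleton_iff, Set.mem_compl_iff]
  constructor
  · rintro ⟨w, hw, rfl, rfl⟩
    exact ⟨rfl, (G.ne_of_adj hw).symm, hw⟩
  · rintro ⟨rfl, _, h⟩
    exact ⟨b, h, rfl, rfl⟩

lemma auxb (n a p δ K L : ℝ) (hδ : 0 < δ) (hn0 : 0 < n) (hK : 0 < K) (hL : 1 ≤ L)
    (hpL : 1 ≤ p * L) (f2 : 4 * K * L ^ 2 ≤ δ ^ 2 * n) (f4 : 2 ≤ δ * n) (hA : δ * n ≤ a) :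
    K * n ≤ p * (a * (a - 1) / 2) := by
  have g1 : a ^ 2 / 4 ≤ a * (a - 1) / 2 := by nlinarith
  have g2 : (δ * n) ^ 2 ≤ a ^ 2 := pow_le_pow_left₀ (by positivity) hA 2
  have g6 : 0 ≤ a * (a - 1) / 2 := le_trans (by positivity) g1
  have g4 : a * (a - 1) / 2 ≤ (p * L) * (a * (a - 1) / 2) := le_mul_of_one_le_left g6 hpL
  have g7 : 4 * K * L ≤ 4 * K * L ^ 2 :=
    mul_le_mul_of_nonneg_left (by nlinarith) (by positivity)
  have g8 : (4 * K * L) * n ≤ (δ ^ 2 * n) * n :=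
    mul_le_mul_of_nonneg_right (g7.trans f2) hn0.le
  have g3 : K * n * L ≤ p * (a * (a - 1) / 2) * L := by
    calc K * n * L ≤ (δ * n) ^ 2 / 4 := by linarith
      _ ≤ (p * L) * (a * (a - 1) / 2) := by linarith
      _ = _ := by ring
  exact le_of_mul_le_mul_right g3 (by linarith)

set_option maxHeartbeats 1000000 in
lemma pern (n : ℕ) (p δ c K : ℝ) (hp0 : 0 ≤ p) (hp1 : p ≤ 1) (hδ : 0 < δ) (hδ1 : δ ≤ 1)
    (hc : c = (δ / 2) ^ 2 / 4) (hcK : c * K = 3) (hK1 : K ≤ p ^ 3 * Real.log n)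
    (h1 : 1 ≤ p ^ 3 * Real.log n) (hL : 1 ≤ Real.log n)
    (f1 : 4 * Real.log n ^ 2 ≤ c * n) (f2 : 4 * K * Real.log n ^ 2 ≤ δ ^ 2 * n)
    (f3 : K ^ 2 * Real.log n ^ 2 ≤ n) (f4 : 2 ≤ δ * n) :
    1 - (2 / (n : ℝ) + 4 * Real.exp (-(n : ℝ))) ≤ gnpProb n p (fun G =>
      (∀ v, (1 - δ) * n * p ≤ ((G.neighborSet v).ncard : ℝ) ∧
        ((G.neighborSet v).ncard : ℝ) ≤ (1 + δ) * n * p) ∧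
      (∀ A : Set (Fin n), δ * n ≤ (A.ncard : ℝ) →
        (1 - δ) * (Nat.choose A.ncard 2 : ℝ) * p ≤ (eIn G A : ℝ) ∧
        (eIn G A : ℝ) ≤ (1 + δ) * (Nat.choose A.ncard 2 : ℝ) * p) ∧
      (∀ A B : Set (Fin n), Disjoint A B → 1 * Real.log n ≤ (A.ncard : ℝ) →
        (n : ℝ) * (p)^2 ≤ (B.ncard : ℝ) →
        (1 - δ) * A.ncard * B.ncard * p ≤ (eBtw G A B : ℝ) ∧
        (eBtw G A B : ℝ) ≤ (1 + δ) * A.ncard * B.ncard * p) ∧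
      (∀ A B : Set (Fin n), Disjoint A B → (n : ℝ) ^ ((3 : ℝ)/4) ≤ (A.ncard : ℝ) →
        (n : ℝ) ^ ((3 : ℝ)/4) ≤ (B.ncard : ℝ) →
        (1 - δ) * A.ncard * B.ncard * p ≤ (eBtw G A B : ℝ) ∧
        (eBtw G A B : ℝ) ≤ (1 + δ) * A.ncard * B.ncard * p)) := by
  classical
  set L := Real.log n with hLdef
  have hcpos : 0 < c := by rw [hc]; positivity
  have hK : 0 < K := by
    by_contra h
    nlinarith
  have hn2 : (2 : ℝ) ≤ n := by
    have : δ * n ≤ 1 * n := mul_le_mul_of_nonneg_right hδ1 (Nat.cast_nonneg n)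
    linarith
  have hn0 : (0 : ℝ) < n := by linarith
  have hpL : 1 ≤ p * L := by
    have : p ^ 3 ≤ p := by
      have : p ^ 2 ≤ 1 := pow_le_one₀ hp0 hp1
      nlinarith
    nlinarith
  have hppos : 0 < p := by
    by_contra h
    have : p = 0 := le_antisymm (not_lt.1 h) hp0
    rw [this] at hpL
    norm_num at hpL
  have hd : 0 < δ / 2 := by linarith
  have hd1 : δ / 2 ≤ 1 := by linarith
  have hstar : ∀ v : Fin n, (cutS {v} {v}ᶜ).card = n - 1 := by
    intro v
    rw [cut_card disjoint_compl_right, Set.ncard_singleton, one_mul, Set.ncard_compl]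
    simp
  have hn1 : ((n - 1 : ℕ) : ℝ) = n - 1 := by
    rw [Nat.cast_sub]
    · simp
    · have : 2 ≤ n := by exact_mod_cast hn2
      omega
  -- first event
  have E1 := chern_union n p (δ / 2) hp0 hp1 (fun v : Fin n => cutS {v} {v}ᶜ)
    (fun v => cut_diag disjoint_compl_right) hd hd1 (p * (n - 1)) n
    (fun v => by rw [hstar v, hn1]) (by simp)
  have B1 : (n : ℝ) * (2 * Real.exp (- ((δ / 2) ^ 2 / 4 * (p * (n - 1))))) ≤ 2 / n := by
    rw [← hc]
    have h : 2 * L ≤ c * (p * (n - 1)) := by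
      have h3 : 2 * L * L ≤ c * (p * (n - 1)) * L := by
        have : c * (n / 2) ≤ c * (p * (n - 1)) * L := by
          have e : c * (p * (n - 1)) * L = c * ((n - 1) * (p * L)) := by ring
          rw [e]
          apply mul_le_mul_of_nonneg_left _ hcpos.le
          nlinarith
        nlinarith
      exact le_of_mul_le_mul_right h3 (by linarith)
    have h4 : Real.exp (-(c * (p * (n - 1)))) ≤ 1 / (n * n) := by
      have : Real.exp (-(2 * L)) = 1 / (n * n) := by
        rw [Real.exp_neg, two_mul, Real.exp_add, hLdef, Real.exp_log hn0, one_div]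
      rw [← this]
      apply Real.exp_le_exp.2
      linarith
    calc _ ≤ (n : ℝ) * (2 * (1 / (n * n))) := by gcongr
      _ = 2 / n := by field_simp
  have hexp : ∀ N : ℝ, N ≤ 4 ^ n →
      N * (2 * Real.exp (- ((δ / 2) ^ 2 / 4 * (K * n)))) ≤ 2 * Real.exp (-(n : ℝ)) := by
    intro N hN
    rw [← hc, ← mul_assoc c, hcK]
    have h4 : (4 : ℝ) ^ n ≤ Real.exp (2 * n) := by
      have h2 : (2 : ℝ) ≤ Real.exp 1 := by
        have := Real.add_one_le_exp (1 : ℝ)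
        linarith
      have : (4 : ℝ) ≤ Real.exp 2 := by
        have e : Real.exp 2 = Real.exp 1 * Real.exp 1 := by rw [← Real.exp_add]; norm_num
        rw [e]
        nlinarith
      calc (4 : ℝ) ^ n ≤ (Real.exp 2) ^ n := pow_le_pow_left₀ (by norm_num) this n
        _ = Real.exp (2 * n) := by rw [← Real.exp_nat_mul, mul_comm]
    calc _ ≤ Real.exp (2 * n) * (2 * Real.exp (-(3 * n))) := by
          gcongr
          exact hN.trans h4
      _ = 2 * Real.exp (-(n : ℝ)) := by
          rw [mul_left_comm, ← Real.exp_add]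
          ring_nf
  -- second event
  have E2 := chern_union n p (δ / 2) hp0 hp1
    (fun A : {A : Set (Fin n) // δ * n ≤ (A.ncard : ℝ)} => inS A.1)
    (fun A => inS_diag) hd hd1 (K * n) ((2 : ℝ) ^ n)
    (fun A => by
      obtain ⟨A, hA⟩ := A
      simp only
      rw [inS_card, Nat.cast_choose_two]
      set a : ℝ := (A.ncard : ℝ)
      exact auxb n a p δ K L hδ hn0 hK hL hpL f2 f4 hA)
    (by
      have : Fintype.card {A : Set (Fin n) // δ * n ≤ (A.ncard : ℝ)} ≤ 2 ^ n := by
        refine (Fintype.card_subtype_le _).trans ?_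
        simp
      exact_mod_cast this)
  have B2 := hexp ((2 : ℝ) ^ n) (pow_le_pow_left₀ (by norm_num) (by norm_num) n)
  -- third event
  have E3 := chern_union n p (δ / 2) hp0 hp1
    (fun A : {A : Set (Fin n) × Set (Fin n) // Disjoint A.1 A.2 ∧
      K * n ≤ p * (A.1.ncard * A.2.ncard : ℝ)} => cutS A.1.1 A.1.2)
    (fun A => cut_diag A.2.1) hd hd1 (K * n) ((4 : ℝ) ^ n)
    (fun A => by
      rw [cut_card A.2.1, Nat.cast_mul]
      exact A.2.2)
    (by
      have : Fintype.card {A : Set (Fin n) × Set (Fin n) // Disjoint A.1 A.2 ∧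
          K * n ≤ p * (A.1.ncard * A.2.ncard : ℝ)} ≤ 4 ^ n := by
        refine (Fintype.card_subtype_le _).trans ?_
        simp only [Fintype.card_prod, Fintype.card_set, Fintype.card_fin]
        rw [← mul_pow]
        norm_num
      exact_mod_cast this)
  have B3 := hexp ((4 : ℝ) ^ n) le_rfl
  rw [gnpProb_compl]
  have U1 := gnpProb_or n p hp0 hp1 (fun G => ∃ v : Fin n, ¬ goodS p (δ / 2) (cutS {v} {v}ᶜ) G)
    (fun G => (∃ A : {A : Set (Fin n) // δ * n ≤ (A.ncard : ℝ)}, ¬ goodS p (δ / 2) (inS A.1) G) ∨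
      ∃ A : {A : Set (Fin n) × Set (Fin n) // Disjoint A.1 A.2 ∧
        K * n ≤ p * (A.1.ncard * A.2.ncard : ℝ)}, ¬ goodS p (δ / 2) (cutS A.1.1 A.1.2) G)
  have U2 := gnpProb_or n p hp0 hp1
    (fun G => (∃ A : {A : Set (Fin n) // δ * n ≤ (A.ncard : ℝ)}, ¬ goodS p (δ / 2) (inS A.1) G))
    (fun G => ∃ A : {A : Set (Fin n) × Set (Fin n) // Disjoint A.1 A.2 ∧
        K * n ≤ p * (A.1.ncard * A.2.ncard : ℝ)}, ¬ goodS p (δ / 2) (cutS A.1.1 A.1.2) G)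
  refine le_trans ?_ (sub_le_sub_left (gnpProb_mono n p hp0 hp1 _
    (fun G => (∃ v : Fin n, ¬ goodS p (δ / 2) (cutS {v} {v}ᶜ) G) ∨
      (∃ A : {A : Set (Fin n) // δ * n ≤ (A.ncard : ℝ)}, ¬ goodS p (δ / 2) (inS A.1) G) ∨
      ∃ A : {A : Set (Fin n) × Set (Fin n) // Disjoint A.1 A.2 ∧
        K * n ≤ p * (A.1.ncard * A.2.ncard : ℝ)}, ¬ goodS p (δ / 2) (cutS A.1.1 A.1.2) G)
    ?_) 1)
  · linarith
  intro G hG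
  by_contra hcon
  push Not at hcon
  obtain ⟨c1, c2, c3⟩ := hcon
  apply hG
  have key : ∀ A B : Set (Fin n), Disjoint A B → K * n ≤ p * (A.ncard * B.ncard : ℝ) →
      (1 - δ) * A.ncard * B.ncard * p ≤ (eBtw G A B : ℝ) ∧
        (eBtw G A B : ℝ) ≤ (1 + δ) * A.ncard * B.ncard * p := by
    intro A B hAB hk
    have := c3 ⟨(A, B), hAB, hk⟩
    unfold goodS at this
    simp only [cut_card hAB, cut_cnt hAB, Nat.cast_mul] at this
    obtain ⟨t1, t2⟩ := this
    have hpos : 0 ≤ δ * (A.ncard * B.ncard * p : ℝ) := by positivity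
    constructor <;> linarith
  refine ⟨?_, ?_, ?_, ?_⟩
  · intro v
    have := c1 v
    unfold goodS at this
    rw [hstar v, cut_cnt disjoint_compl_right, hn1, ← deg_eq] at this
    obtain ⟨t1, t2⟩ := this
    constructor
    · have : (1 - δ) * n ≤ (1 - δ / 2) * (n - 1) := by nlinarith
      have := mul_le_mul_of_nonneg_right this hp0
      linarith
    · have : (1 + δ / 2) * (n - 1) ≤ (1 + δ) * n := by nlinarith
      have := mul_le_mul_of_nonneg_right this hp0
      linarith
  · intro A hA
    have := c2 ⟨A, hA⟩
    unfold goodS at this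
    simp only [inS_card, inS_cnt] at this
    obtain ⟨t1, t2⟩ := this
    have hpos : 0 ≤ δ * ((A.ncard.choose 2 : ℝ) * p) := by positivity
    constructor <;> linarith
  · intro A B hAB hA hB
    refine key A B hAB ?_
    rw [one_mul] at hA
    have h5 : L * (n * p ^ 2) ≤ A.ncard * B.ncard :=
      mul_le_mul hA hB (by positivity) (by positivity)
    have h6 := mul_le_mul_of_nonneg_left h5 hp0
    have h7 := mul_le_mul_of_nonneg_right hK1 hn0.le
    linarith
  · intro A B hAB hA hB
    refine key A B hAB ?_
    have h5 : (n : ℝ) ^ ((3 : ℝ)/4) * (n : ℝ) ^ ((3 : ℝ)/4) ≤ A.ncard * B.ncard :=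
      mul_le_mul hA hB (by positivity) (by positivity)
    have h8 : (n : ℝ) ^ ((3 : ℝ)/4) * (n : ℝ) ^ ((3 : ℝ)/4) = n * Real.sqrt n := by
      rw [← Real.rpow_add hn0, Real.sqrt_eq_rpow, ← Real.rpow_one_add' hn0.le (by norm_num)]
      norm_num
    rw [h8] at h5
    have h9 : K * L ≤ Real.sqrt n := Real.le_sqrt_of_sq_le (by rw [mul_pow]; exact f3)
    have h6 := mul_le_mul_of_nonneg_left h5 hp0
    refine le_trans ?_ h6
    have : K ≤ p * Real.sqrt n := by nlinarith
    nlinarith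

/-- under the stated conditions on `p = p(n)` (with `δ = ε/5`), there is
`C = C(ε) > 0` such that a.a.s. `G(n,p)` satisfies properties (a)-(d) of Claim 5
(degrees, internal edge counts and cross edge counts are as expected up to a factor
`1 ± δ`). -/
theorem stmt_17 (p : ℕ → ℝ) (hp : ∀ n, p n ∈ Set.Icc (0 : ℝ) 1)
    (hgrow : Tendsto (fun n : ℕ => p n * Real.log n ^ ((1 : ℝ)/3)) atTop atTop)
    (hlim : limsup p atTop < 1/2)
    (ε : ℝ) (hε : 0 < ε) (hpε : ∀ᶠ n : ℕ in atTop, p n ≤ 1/2 - ε)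
    (δ : ℝ) (hδ : δ = ε / 5) :
    ∃ C > (0 : ℝ), Tendsto (fun n => gnpProb n (p n) (fun G =>
      (∀ v, (1 - δ) * n * p n ≤ ((G.neighborSet v).ncard : ℝ) ∧
        ((G.neighborSet v).ncard : ℝ) ≤ (1 + δ) * n * p n) ∧
      (∀ A : Set (Fin n), δ * n ≤ (A.ncard : ℝ) →
        (1 - δ) * (Nat.choose A.ncard 2 : ℝ) * p n ≤ (eIn G A : ℝ) ∧
        (eIn G A : ℝ) ≤ (1 + δ) * (Nat.choose A.ncard 2 : ℝ) * p n) ∧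
      (∀ A B : Set (Fin n), Disjoint A B → C * Real.log n ≤ (A.ncard : ℝ) →
        (n : ℝ) * (p n)^2 ≤ (B.ncard : ℝ) →
        (1 - δ) * A.ncard * B.ncard * p n ≤ (eBtw G A B : ℝ) ∧
        (eBtw G A B : ℝ) ≤ (1 + δ) * A.ncard * B.ncard * p n) ∧
      (∀ A B : Set (Fin n), Disjoint A B → (n : ℝ) ^ ((3 : ℝ)/4) ≤ (A.ncard : ℝ) →
        (n : ℝ) ^ ((3 : ℝ)/4) ≤ (B.ncard : ℝ) →
        (1 - δ) * A.ncard * B.ncard * p n ≤ (eBtw G A B : ℝ) ∧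
        (eBtw G A B : ℝ) ≤ (1 + δ) * A.ncard * B.ncard * p n)))
      atTop (nhds 1) := by
  have h0 : ∀ᶠ n : ℕ in atTop, 0 ≤ p n := Eventually.of_forall fun n => (hp n).1
  have hε2 : ε ≤ 1 / 2 := by
    obtain ⟨n, hn⟩ := hpε.exists
    have := (hp n).1
    linarith
  have hδ0 : 0 < δ := by rw [hδ]; positivity
  have hδ1 : δ ≤ 1 := by rw [hδ]; linarith
  refine ⟨1, one_pos, ?_⟩
  set c : ℝ := (δ / 2) ^ 2 / 4 with hc
  have hcpos : 0 < c := by positivity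
  set K : ℝ := 3 / c with hK
  have hKpos : 0 < K := by positivity
  have hcK : c * K = 3 := by rw [hK]; field_simp
  have hlog : Tendsto (fun n : ℕ => Real.log n) atTop atTop :=
    Real.tendsto_log_atTop.comp tendsto_natCast_atTop_atTop
  have hcube : Tendsto (fun n : ℕ => p n ^ 3 * Real.log n) atTop atTop := by
    have h := (tendsto_pow_atTop (α := ℝ) (n := 3) (by norm_num)).comp hgrow
    refine h.congr' ?_
    filter_upwards [hlog.eventually_ge_atTop 0] with n hn
    simp only [Function.comp]
    rw [mul_pow, ← Real.rpow_natCast (Real.log n ^ ((1 : ℝ) / 3)), ← Real.rpow_mul hn]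
    norm_num
  have hsq : ∀ M : ℝ, 0 < M → ∀ᶠ n : ℕ in atTop, Real.log n ^ 2 ≤ M * n := by
    intro M hM
    have h := (Real.isLittleO_pow_log_id_atTop (n := 2)).comp_tendsto
      (tendsto_natCast_atTop_atTop (R := ℝ))
    filter_upwards [h.bound hM] with n hn
    simpa using hn
  have hlin : Tendsto (fun n : ℕ => δ * (n : ℝ)) atTop atTop :=
    tendsto_natCast_atTop_atTop.const_mul_atTop hδ0
  have hlow : Tendsto (fun n : ℕ => 1 - (2 / (n : ℝ) + 4 * Real.exp (-(n : ℝ)))) atTop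
      (nhds 1) := by
    have a1 : Tendsto (fun n : ℕ => 2 / (n : ℝ)) atTop (nhds 0) :=
      tendsto_const_div_atTop_nhds_zero_nat 2
    have a2 : Tendsto (fun n : ℕ => Real.exp (-(n : ℝ))) atTop (nhds 0) :=
      Real.tendsto_exp_neg_atTop_nhds_zero.comp tendsto_natCast_atTop_atTop
    have := (a1.add (a2.const_mul 4)).const_sub 1
    simpa using this
  refine tendsto_of_tendsto_of_tendsto_of_le_of_le' hlow tendsto_const_nhds ?_ ?_
  · filter_upwards [hcube.eventually_ge_atTop K, hcube.eventually_ge_atTop 1,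
      hlog.eventually_ge_atTop 1, hsq (c / 4) (by positivity),
      hsq (δ ^ 2 / (4 * K)) (by positivity), hsq (1 / K ^ 2) (by positivity),
      hlin.eventually_ge_atTop 2] with n g1 g2 g3 g4 g5 g6 g7
    refine pern n (p n) δ c K (hp n).1 (hp n).2 hδ0 hδ1 hc hcK g1 g2 g3 (by linarith) ?_ ?_ g7
    · rw [div_mul_eq_mul_div, le_div_iff₀ (by positivity)] at g5
      linarith
    · rw [div_mul_eq_mul_div, le_div_iff₀ (by positivity)] at g6
      linarith
  · refine Eventually.of_forall fun n => ?_
    rw [gnpProb_compl]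
    have := gnpProb_nonneg n (p n) (hp n).1 (hp n).2
    exact sub_le_self _ (this _)
end
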